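/- arXiv:2201.08895 — 3 statements merged into one kernel-verified Lean document; each statement's English description precedes it below -/
import Mathlib

section
/- For every k ∈ ℕ, the set kcnfs-σ-spectrum is a topologically closed subset of ℝ. -/
/-!
Two facts about the spectrum give closedness.

*Gaps below every point.* The spectrum contains no infinite strictly increasing sequence, so for
every `x` some interval `(x - ε, x)` misses it. This goes by induction on `k`. A formula with
`h` variable-disjoint clauses has satisfaction probability at most `(1 - 2 ^ (-k)) ^ h`; so if the
probability is at least `δ > 0`, a maximal packing is bounded in size, and its boundedly many
variables meet every nonempty clause. Branching on these variables one at a time writes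
the probability as an iterated average of probabilities of formulas of smaller width, and sums of
well-ordered sets of reals are well-ordered (`isPWO_hitSet`, `isPWO_spectrum`).

*Shrinking sunflowers.* If `φ` has `h` clauses containing `c` whose petals are variable-disjoint,
replacing all clauses that contain `c` by `c` itself lowers the probability by at most
`(1 - 2 ^ (-k)) ^ h` (`exists_shrink`). A formula without such sunflowers has boundedly many
clauses (`card_link_le`), so only finitely many probabilities arise from such formulas.

If `x` is in the closure, let `(x - ε, x)` be a gap and take `h` with `(1 - 2 ^ (-k)) ^ h < ε`.
Spectrum points near `x` are then at least `x`. Among the formulas with probability in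
`[x, x + δ)` take one with the fewest clauses: shrinking a sunflower would lead to a
probability above `x - ε`, hence again in `[x, x + δ)`, with fewer clauses. So the formula is
sunflower-free. Thus `x` is in the closure of a finite part of the spectrum, hence in it.
-/

open Finset

open scoped Classical

/-- A literal is a propositional variable (a natural number) together with a sign. -/
abbrev PLit := ℕ × Bool

/-- A clause is a finite set of literals. -/
abbrev PClause := Finset PLit

/-- A CNF formula is a finite set of clauses. -/
abbrev PCnf := Finset PClause

/-- A clause is valid if it contains no variable together with its negation. -/
def clauseValid (c : PClause) : Prop := ∀ v : ℕ, ¬((v, true) ∈ c ∧ (v, false) ∈ c)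

/-- The variables occurring in a clause. -/
def clauseVars (c : PClause) : Finset ℕ := c.image Prod.fst

/-- A CNF formula is valid if all of its clauses are. -/
def cnfValid (φ : PCnf) : Prop := ∀ c ∈ φ, clauseValid c

/-- The variables occurring in a CNF formula. -/
def cnfVars (φ : PCnf) : Finset ℕ := φ.sup clauseVars

/-- `φ` is a `k`CNF formula: all clauses are valid and have at most `k` literals. -/
def IsKCnf (k : ℕ) (φ : PCnf) : Prop := cnfValid φ ∧ ∀ c ∈ φ, c.card ≤ k

/-- An assignment is represented by the finite set `S` of variables set to true;
`litSat S l` says that the literal `l` is made true. -/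
def litSat (S : Finset ℕ) (l : PLit) : Prop := if l.2 then l.1 ∈ S else l.1 ∉ S

/-- A clause is satisfied if it contains a literal made true. -/
def clauseSat (S : Finset ℕ) (c : PClause) : Prop := ∃ l ∈ c, litSat S l

/-- A CNF formula is satisfied if all of its clauses are. -/
def cnfSat (S : Finset ℕ) (φ : PCnf) : Prop := ∀ c ∈ φ, clauseSat S c

/-- The satisfaction probability `σ(φ)`: the fraction of assignments
`β : vars(φ) → {0,1}` (represented as subsets of `cnfVars φ`) satisfying `φ`. -/
noncomputable def satProb (φ : PCnf) : ℝ :=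
  ((cnfVars φ).powerset.filter (fun S => cnfSat S φ)).card / 2 ^ (cnfVars φ).card

/-- The set of satisfaction probabilities of `k`CNF formulas. -/
def kcnfSpectrum (k : ℕ) : Set ℝ := {x | ∃ φ : PCnf, IsKCnf k φ ∧ satProb φ = x}

/-- A packing: a set of pairwise variable-disjoint clauses. -/
def IsPacking (π : PCnf) : Prop :=
  ∀ c ∈ π, ∀ c' ∈ π, c ≠ c' → Disjoint (clauseVars c) (clauseVars c')

/-- A sunflower with core `c`. -/
def IsSunflower (ψ : PCnf) (c : PClause) : Prop :=
  (∀ e ∈ ψ, c ⊆ e) ∧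
    ∀ e ∈ ψ, ∀ e' ∈ ψ, e ≠ e' → clauseVars e ∩ clauseVars e' = clauseVars c

/-- The link of a clause `c` in `φ`: all superclauses of `c` in `φ`. -/
noncomputable def link (φ : PCnf) (c : PClause) : PCnf := φ.filter (fun e => c ⊆ e)

/-- The literal `l` is made true by the assignment `β : V → {0,1}` represented by `S ⊆ V`. -/
def litTrue (V S : Finset ℕ) (l : PLit) : Prop :=
  l.1 ∈ V ∧ (if l.2 then l.1 ∈ S else l.1 ∉ S)

/-- The literal `l` is made false by the assignment `β : V → {0,1}` represented by `S ⊆ V`. -/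
def litFalse (V S : Finset ℕ) (l : PLit) : Prop :=
  l.1 ∈ V ∧ ¬(if l.2 then l.1 ∈ S else l.1 ∉ S)

/-- The restriction `φ|_β` of `φ` to the assignment `β : V → {0,1}` represented by
`S ⊆ V`: remove every clause containing a literal made true by `β`, delete from the
remaining clauses all literals made false by `β`, and add the unit clause `{v}` for
each `v ∈ S` and the unit clause `{¬v}` for each `v ∈ V \ S`. -/
noncomputable def restrict (φ : PCnf) (V S : Finset ℕ) : PCnf :=
  ((φ.filter fun c => ¬ ∃ l ∈ c, litTrue V S l).image fun c =>
      c.filter fun l => ¬ litFalse V S l)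
    ∪ S.image (fun v => ({(v, true)} : PClause))
    ∪ (V \ S).image (fun v => ({(v, false)} : PClause))

/-! ### Probabilities of events on assignments -/

/-- The probability of the event `p` for a uniformly random subset of `V`. -/
noncomputable def prob (V : Finset ℕ) (p : Finset ℕ → Prop) : ℝ :=
  (V.powerset.filter p).card / 2 ^ V.card

/-- The event `p` depends only on the variables in `A`. -/
def DepOn (A : Finset ℕ) (p : Finset ℕ → Prop) : Prop :=
  ∀ v ∉ A, ∀ S, p (insert v S) ↔ p S

theorem prob_congr {V : Finset ℕ} {p q : Finset ℕ → Prop} (h : ∀ S ⊆ V, (p S ↔ q S)) :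
    prob V p = prob V q := by
  unfold prob
  rw [Finset.filter_congr (fun S hS => h S (Finset.mem_powerset.1 hS))]

theorem prob_mono {V : Finset ℕ} {p q : Finset ℕ → Prop} (h : ∀ S ⊆ V, p S → q S) :
    prob V p ≤ prob V q := by
  unfold prob
  gcongr ?_ / _
  exact_mod_cast Finset.card_le_card (fun S hS => by
    simp only [Finset.mem_filter, Finset.mem_powerset] at hS ⊢
    exact ⟨hS.1, h S hS.1 hS.2⟩)

theorem prob_nonneg (V : Finset ℕ) (p : Finset ℕ → Prop) : 0 ≤ prob V p := by
  unfold prob; positivity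

theorem prob_true (V : Finset ℕ) : prob V (fun _ => True) = 1 := by
  simp [prob]

theorem prob_false (V : Finset ℕ) : prob V (fun _ => False) = 0 := by
  simp [prob]

theorem prob_or_le (V : Finset ℕ) (p q : Finset ℕ → Prop) :
    prob V (fun S => p S ∨ q S) ≤ prob V p + prob V q := by
  unfold prob
  rw [← add_div]
  gcongr ?_ / _
  exact_mod_cast (Finset.card_le_card (t := V.powerset.filter p ∪ V.powerset.filter q)
    fun S hS => by simpa [and_or_left] using hS).trans (Finset.card_union_le _ _)

theorem prob_not (V : Finset ℕ) (p : Finset ℕ → Prop) :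
    prob V p = 1 - prob V (fun S => ¬ p S) := by
  unfold prob
  have h := Finset.card_filter_add_card_filter_not (s := V.powerset) p
  rw [Finset.card_powerset] at h
  rw [eq_sub_iff_add_eq, ← add_div, div_eq_one_iff_eq (by positivity)]
  norm_cast
  convert h

theorem prob_insert {V : Finset ℕ} {v : ℕ} (hv : v ∉ V) (p : Finset ℕ → Prop) :
    prob (insert v V) p = (prob V p + prob V (fun S => p (insert v S))) / 2 := by
  unfold prob
  have hd : Disjoint (V.powerset.filter p)
      ((V.powerset.filter (fun S => p (insert v S))).image (insert v)) := by
    rw [Finset.disjoint_left]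
    intro S hS hS'
    simp only [Finset.mem_filter, Finset.mem_powerset, Finset.mem_image] at hS hS'
    obtain ⟨T, -, rfl⟩ := hS'
    exact hv (hS.1 (Finset.mem_insert_self _ _))
  have hi : Set.InjOn (insert v) ((V.powerset.filter (fun S => p (insert v S)) : Finset _) :
      Set (Finset ℕ)) := by
    intro S hS T hT h
    simp only [Finset.coe_filter, Finset.mem_powerset, Set.mem_ofPred_eq] at hS hT
    rw [← Finset.erase_insert (fun h => hv (hS.1 h)), h,
      Finset.erase_insert (fun h => hv (hT.1 h))]
  rw [Finset.powerset_insert, Finset.filter_union, Finset.filter_image,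
    Finset.card_union_of_disjoint hd, Finset.card_image_of_injOn hi,
    Finset.card_insert_of_notMem hv]
  push_cast
  rw [pow_succ]
  field_simp

theorem prob_eq_of_subset {A V : Finset ℕ} {p : Finset ℕ → Prop} (hp : DepOn A p) (hAV : A ⊆ V) :
    prob V p = prob A p := by
  have key : ∀ B : Finset ℕ, Disjoint A B → prob (A ∪ B) p = prob A p := by
    intro B
    induction B using Finset.induction_on with
    | empty => simp
    | insert v B hv ih =>
      intro hd
      rw [Finset.disjoint_insert_right] at hd
      rw [Finset.union_insert, prob_insert (by simp [hd.1, hv]),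
        prob_congr (p := fun S => p (insert v S)) (q := p) (fun S _ => hp v hd.1 S), ih hd.2]
      ring
  have := key (V \ A) Finset.disjoint_sdiff
  rwa [Finset.union_sdiff_of_subset hAV] at this

/-- Events depending on disjoint sets of variables are independent. -/
theorem prob_and {A B : Finset ℕ} (hAB : Disjoint A B) (V : Finset ℕ) :
    ∀ p q : Finset ℕ → Prop, DepOn A p → DepOn B q →
      prob V (fun S => p S ∧ q S) = prob V p * prob V q := by
  induction V using Finset.induction_on with
  | empty =>
    intro p q _ _
    by_cases h1 : p ∅ <;> by_cases h2 : q ∅ <;> simp [prob, Finset.filter_singleton, h1, h2]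
  | insert v V hv ih =>
    intro p q hp hq
    have hins : ∀ {C : Finset ℕ} {r : Finset ℕ → Prop}, DepOn C r →
        DepOn C (fun S => r (insert v S)) := by
      intro C r hr w hw S
      change r _ ↔ r _
      rw [Finset.insert_comm]
      exact hr w hw _
    rw [prob_insert hv, prob_insert hv p, prob_insert hv q, ih p q hp hq,
      ih (fun S => p (insert v S)) (fun S => q (insert v S)) (hins hp) (hins hq)]
    by_cases hvA : v ∈ A
    · have hvB : v ∉ B := Finset.disjoint_left.1 hAB hvA
      rw [prob_congr (p := fun S => q (insert v S)) (q := q) (fun S _ => hq v hvB S)]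
      ring
    · rw [prob_congr (p := fun S => p (insert v S)) (q := p) (fun S _ => hp v hvA S)]
      ring

/-! ### Clauses and formulas as events -/

theorem mem_cnfVars {φ : PCnf} {v : ℕ} : v ∈ cnfVars φ ↔ ∃ c ∈ φ, ∃ b, (v, b) ∈ c := by
  simp only [cnfVars, Finset.mem_sup, clauseVars, Finset.mem_image, Prod.exists]
  constructor
  · rintro ⟨c, hc, a, b, h, rfl⟩
    exact ⟨c, hc, b, h⟩
  · rintro ⟨c, hc, b, h⟩
    exact ⟨c, hc, v, b, h, rfl⟩

theorem clauseVars_subset_cnfVars {φ : PCnf} {c : PClause} (hc : c ∈ φ) :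
    clauseVars c ⊆ cnfVars φ := Finset.le_sup (f := clauseVars) hc

theorem clauseVars_mono {c e : PClause} (h : c ⊆ e) : clauseVars c ⊆ clauseVars e :=
  Finset.image_subset_image h

theorem mem_clauseVars {c : PClause} {l : PLit} (h : l ∈ c) : l.1 ∈ clauseVars c :=
  Finset.mem_image_of_mem _ h

theorem clauseValid_mono {c e : PClause} (h : c ⊆ e) (he : clauseValid e) : clauseValid c :=
  fun v hv => he v ⟨h hv.1, h hv.2⟩

theorem DepOn.mono {A B : Finset ℕ} {p : Finset ℕ → Prop} (h : DepOn A p) (hAB : A ⊆ B) :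
    DepOn B p := fun v hv S => h v (fun h' => hv (hAB h')) S

theorem DepOn.not {A : Finset ℕ} {p : Finset ℕ → Prop} (h : DepOn A p) :
    DepOn A (fun S => ¬ p S) := fun v hv S => not_congr (h v hv S)

theorem depOn_litSat (l : PLit) : DepOn {l.1} (fun S => litSat S l) := by
  intro v hv S
  have : l.1 ≠ v := fun h => hv (by simp [h])
  simp [litSat, Finset.mem_insert, this]

theorem depOn_clauseSat (c : PClause) : DepOn (clauseVars c) (fun S => clauseSat S c) := by
  intro v hv S
  refine exists_congr fun l => and_congr_right fun hl => ?_
  exact (depOn_litSat l).mono (by simpa using mem_clauseVars hl) v hv S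

theorem depOn_cnfSat (φ : PCnf) : DepOn (cnfVars φ) (fun S => cnfSat S φ) := by
  intro v hv S
  refine forall₂_congr fun c hc => ?_
  exact (depOn_clauseSat c).mono (clauseVars_subset_cnfVars hc) v hv S

theorem satProb_eq {φ : PCnf} {V : Finset ℕ} (h : cnfVars φ ⊆ V) :
    satProb φ = prob V (fun S => cnfSat S φ) :=
  (prob_eq_of_subset (depOn_cnfSat φ) h).symm

theorem prob_not_litSat {V : Finset ℕ} {l : PLit} (h : l.1 ∈ V) :
    prob V (fun S => ¬ litSat S l) = 1 / 2 := by
  obtain ⟨v, b⟩ := l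
  have hn : v ∉ V.erase v := Finset.notMem_erase _ _
  rw [← Finset.insert_erase h, prob_insert hn]
  have h1 : prob (V.erase v) (fun S => ¬ litSat S (v, b)) =
      prob (V.erase v) (fun _ => b = true) := prob_congr fun S hS => by
    have : v ∉ S := fun h => hn (hS h)
    cases b <;> simp [litSat, this]
  have h2 : prob (V.erase v) (fun S => ¬ litSat (insert v S) (v, b)) =
      prob (V.erase v) (fun _ => b = false) := prob_congr fun S _ => by
    cases b <;> simp [litSat]
  rw [h1, h2]
  cases b <;> simp [prob_true, prob_false]

theorem prob_not_clauseSat {V : Finset ℕ} (c : PClause) :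
    clauseValid c → clauseVars c ⊆ V →
      prob V (fun S => ¬ clauseSat S c) = (1 / 2) ^ c.card := by
  induction c using Finset.induction_on with
  | empty =>
    intro _ _
    rw [prob_congr (q := fun _ => True) (by simp [clauseSat]), prob_true]
    simp
  | insert l c hl ih =>
    intro hval hV
    have hd : Disjoint ({l.1} : Finset ℕ) (clauseVars c) := by
      rw [Finset.disjoint_singleton_left]
      intro h
      obtain ⟨m, hm, hml⟩ := Finset.mem_image.1 h
      obtain ⟨v, b⟩ := l
      obtain ⟨w, b'⟩ := m
      obtain rfl : w = v := hml
      have := hval w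
      cases b <;> cases b' <;> simp_all
    rw [prob_congr (q := fun S => ¬ litSat S l ∧ ¬ clauseSat S c),
      prob_and hd V _ _ (depOn_litSat l).not (depOn_clauseSat c).not,
      ih (clauseValid_mono (Finset.subset_insert _ _) hval)
        ((clauseVars_mono (Finset.subset_insert _ _)).trans hV),
      prob_not_litSat (hV (mem_clauseVars (Finset.mem_insert_self _ _))),
      Finset.card_insert_of_notMem hl, pow_succ, mul_comm]
    intro S _
    simp [clauseSat, forall_and]

/-- Variable-disjoint clauses of size at most `k` are simultaneously satisfied with probability
exponentially small in their number. The clauses are given as `g e`, to cover petals `e \ c`. -/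
theorem prob_packing_le {V : Finset ℕ} {k : ℕ} (g : PClause → PClause) (π : PCnf) :
    (∀ e ∈ π, clauseValid (g e) ∧ (g e).card ≤ k ∧ clauseVars (g e) ⊆ V) →
    (∀ e ∈ π, ∀ e' ∈ π, e ≠ e' → Disjoint (clauseVars (g e)) (clauseVars (g e'))) →
      prob V (fun S => ∀ e ∈ π, clauseSat S (g e)) ≤ (1 - (1 / 2) ^ k) ^ π.card := by
  induction π using Finset.induction_on with
  | empty => intro _ _; simp [prob_true]
  | insert e π he ih =>
    intro h1 h2
    have hdep : DepOn (π.biUnion fun e => clauseVars (g e))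
        (fun S => ∀ e ∈ π, clauseSat S (g e)) := by
      intro v hv S
      refine forall₂_congr fun e he => ?_
      exact (depOn_clauseSat (g e)).mono
        (Finset.subset_biUnion_of_mem (fun e => clauseVars (g e)) he) v hv S
    have hd : Disjoint (clauseVars (g e)) (π.biUnion fun e => clauseVars (g e)) := by
      rw [Finset.disjoint_biUnion_right]
      intro e' he'
      exact h2 e (Finset.mem_insert_self _ _) e' (Finset.mem_insert_of_mem he')
        (fun h => he (h ▸ he'))
    obtain ⟨hv, hc, hV⟩ := h1 e (Finset.mem_insert_self _ _)
    rw [prob_congr (q := fun S => clauseSat S (g e) ∧ ∀ e ∈ π, clauseSat S (g e))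
        (fun S _ => by simp),
      prob_and hd V _ _ (depOn_clauseSat _) hdep, Finset.card_insert_of_notMem he, pow_succ,
      mul_comm]
    have hle : prob V (fun S => clauseSat S (g e)) ≤ 1 - (1 / 2) ^ k := by
      rw [prob_not, prob_not_clauseSat _ hv hV]
      have : (1 / 2 : ℝ) ^ k ≤ (1 / 2) ^ (g e).card :=
        pow_le_pow_of_le_one (by norm_num) (by norm_num) hc
      linarith
    refine mul_le_mul (ih (fun e' he' => h1 e' (Finset.mem_insert_of_mem he'))
      (fun a ha b hb => h2 a (Finset.mem_insert_of_mem ha) b (Finset.mem_insert_of_mem hb)))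
      hle (prob_nonneg _ _) (pow_nonneg ?_ _)
    have : (1 / 2 : ℝ) ^ k ≤ 1 := pow_le_one₀ (by norm_num) (by norm_num)
    linarith

theorem satProb_nonneg (φ : PCnf) : 0 ≤ satProb φ := by
  unfold satProb; positivity

/-! ### Packings and hitting sets -/

/-- Either `h` clauses have pairwise disjoint `f`-images, or a set of at most `h * K` variables
meets all nonempty `f`-images. -/
theorem packing_or_hit (φ : PCnf) (f : PClause → Finset ℕ) (K : ℕ)
    (hK : ∀ e ∈ φ, (f e).card ≤ K) (h : ℕ) :
    (∃ π ⊆ φ, π.card = h ∧ ∀ e ∈ π, ∀ e' ∈ π, e ≠ e' → Disjoint (f e) (f e')) ∨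
      ∃ V : Finset ℕ, V.card ≤ h * K ∧ ∀ e ∈ φ, f e = ∅ ∨ ¬ Disjoint (f e) V := by
  induction h with
  | zero => exact Or.inl ⟨∅, by simp⟩
  | succ h ih =>
    rcases ih with ⟨π, hπ, hcard, hdis⟩ | ⟨V, hV, hhit⟩
    · by_cases hall : ∀ e ∈ φ, f e = ∅ ∨ ¬ Disjoint (f e) (π.biUnion f)
      · refine Or.inr ⟨π.biUnion f, ?_, hall⟩
        calc (π.biUnion f).card ≤ π.card * K :=
              Finset.card_biUnion_le_card_mul _ _ _ (fun e he => hK e (hπ he))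
          _ ≤ (h + 1) * K := by rw [hcard]; gcongr; omega
      · push Not at hall
        obtain ⟨e, he, hne, hd⟩ := hall
        rw [Finset.disjoint_biUnion_right] at hd
        have heπ : e ∉ π := fun h' => hne.ne_empty (Finset.disjoint_self_iff_empty _ |>.1 (hd e h'))
        refine Or.inl ⟨insert e π, Finset.insert_subset he hπ, by
          rw [Finset.card_insert_of_notMem heπ, hcard], ?_⟩
        intro a ha b hb hab
        rcases Finset.mem_insert.1 ha with rfl | ha' <;>
          rcases Finset.mem_insert.1 hb with rfl | hb'
        · exact absurd rfl hab
        · exact hd b hb'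
        · exact (hd a ha').symm
        · exact hdis a ha' b hb' hab
    · exact Or.inr ⟨V, hV.trans (by gcongr; omega), hhit⟩

theorem card_clauseVars_le (c : PClause) : (clauseVars c).card ≤ c.card := Finset.card_image_le

theorem one_sub_half_pow_lt_one (k : ℕ) : (1 - (1 / 2) ^ k : ℝ) < 1 := by
  have : (0 : ℝ) < (1 / 2) ^ k := by positivity
  linarith

theorem one_sub_half_pow_nonneg (k : ℕ) : (0 : ℝ) ≤ 1 - (1 / 2) ^ k := by
  have : (1 / 2 : ℝ) ^ k ≤ 1 := pow_le_one₀ (by norm_num) (by norm_num)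
  linarith

/-! ### The spectrum has a gap below every point -/

/-- The formula `φ` after fixing the variable `v` to the value `b`. Unlike in `restrict`, no unit
clause for `v` is added. -/
def fixVar (φ : PCnf) (v : ℕ) (b : Bool) : PCnf :=
  (φ.filter fun c => (v, b) ∉ c).image fun c => c.erase (v, !b)

theorem mem_fixVar {φ : PCnf} {v : ℕ} {b : Bool} {d : PClause} :
    d ∈ fixVar φ v b ↔ ∃ c ∈ φ, (v, b) ∉ c ∧ c.erase (v, !b) = d := by
  simp [fixVar, and_assoc]

theorem cnfSat_fixVar (φ : PCnf) {v : ℕ} {b : Bool} {S T : Finset ℕ}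
    (hT : ∀ w, w ≠ v → (w ∈ T ↔ w ∈ S)) (hv : v ∈ T ↔ b = true) :
    cnfSat T φ ↔ cnfSat S (fixVar φ v b) := by
  have hlit : ∀ l : PLit, l.1 ≠ v → (litSat T l ↔ litSat S l) := by
    intro l hl
    simp [litSat, hT _ hl]
  have htrue : litSat T (v, b) := by cases b <;> simp_all [litSat]
  have hfalse : ¬ litSat T (v, !b) := by cases b <;> simp_all [litSat]
  have hb : ∀ b', b' = b ∨ b' = !b := by intro b'; cases b <;> cases b' <;> simp
  constructor
  · intro h d hd
    obtain ⟨c, hc, hvc, rfl⟩ := mem_fixVar.1 hd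
    obtain ⟨⟨w, b'⟩, hl, hsat⟩ := h c hc
    have hw : w ≠ v := by
      rintro rfl
      rcases hb b' with rfl | rfl
      · exact hvc hl
      · exact hfalse hsat
    exact ⟨(w, b'), Finset.mem_erase.2 ⟨by simp [hw], hl⟩, (hlit _ hw).1 hsat⟩
  · intro h c hc
    by_cases hvc : (v, b) ∈ c
    · exact ⟨_, hvc, htrue⟩
    · obtain ⟨⟨w, b'⟩, hl, hsat⟩ := h _ (mem_fixVar.2 ⟨c, hc, hvc, rfl⟩)
      rw [Finset.mem_erase] at hl
      have hw : w ≠ v := by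
        rintro rfl
        rcases hb b' with rfl | rfl
        · exact hvc hl.2
        · exact hl.1 rfl
      exact ⟨_, hl.2, (hlit _ hw).2 hsat⟩

theorem cnfVars_fixVar_subset (φ : PCnf) (v : ℕ) (b : Bool) :
    cnfVars (fixVar φ v b) ⊆ (cnfVars φ).erase v := by
  intro w hw
  obtain ⟨d, hd, b', hl⟩ := mem_cnfVars.1 hw
  obtain ⟨c, hc, hvc, rfl⟩ := mem_fixVar.1 hd
  rw [Finset.mem_erase] at hl
  refine Finset.mem_erase.2 ⟨?_, mem_cnfVars.2 ⟨c, hc, b', hl.2⟩⟩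
  rintro rfl
  cases b <;> cases b' <;> simp_all

theorem satProb_fixVar (φ : PCnf) (v : ℕ) :
    satProb φ = (satProb (fixVar φ v false) + satProb (fixVar φ v true)) / 2 := by
  have hn : v ∉ (cnfVars φ).erase v := Finset.notMem_erase _ _
  rw [satProb_eq (φ := φ) (V := insert v ((cnfVars φ).erase v)) (Finset.subset_insert_iff.2 subset_rfl),
    prob_insert hn, satProb_eq (cnfVars_fixVar_subset φ v false),
    satProb_eq (cnfVars_fixVar_subset φ v true)]
  congr 2
  · refine prob_congr fun S hS => cnfSat_fixVar φ (fun _ _ => Iff.rfl) ?_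
    simpa using fun h => hn (hS h)
  · refine prob_congr fun S hS => cnfSat_fixVar φ (fun w hw => by simp [hw]) (by simp)

/-- Valid formulas in which some set of at most `s` variables meets every clause of size `k + 1`,
all other clauses having size at most `k`. For `s = 0` these are the `k`CNF formulas. -/
def HitCnf (k s : ℕ) (φ : PCnf) : Prop :=
  cnfValid φ ∧ ∃ V : Finset ℕ, V.card ≤ s ∧
    ∀ c ∈ φ, c.card ≤ k ∨ (c.card ≤ k + 1 ∧ ¬ Disjoint (clauseVars c) V)

/-- The negated satisfaction probabilities of the formulas with `HitCnf k s φ`; the sign turns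
the absence of increasing sequences into Mathlib's `Set.IsPWO`. -/
def hitSet (k s : ℕ) : Set ℝ := {y | ∃ φ, HitCnf k s φ ∧ y = -satProb φ}

theorem hitCnf_fixVar {k s : ℕ} {φ : PCnf} {V : Finset ℕ} {v : ℕ} (b : Bool) (hval : cnfValid φ)
    (hvV : v ∈ V) (hcard : V.card ≤ s + 1)
    (hV : ∀ c ∈ φ, c.card ≤ k ∨ (c.card ≤ k + 1 ∧ ¬ Disjoint (clauseVars c) V)) :
    HitCnf k s (fixVar φ v b) := by
  refine ⟨?_, V.erase v, ?_, ?_⟩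
  · intro d hd
    obtain ⟨c, hc, -, rfl⟩ := mem_fixVar.1 hd
    exact clauseValid_mono (Finset.erase_subset _ _) (hval c hc)
  · rw [Finset.card_erase_of_mem hvV]; omega
  · intro d hd
    obtain ⟨c, hc, hvc, rfl⟩ := mem_fixVar.1 hd
    have hle := Finset.card_erase_le (s := c) (a := (v, !b))
    rcases hV c hc with h | ⟨h, hnd⟩
    · exact Or.inl (hle.trans h)
    · by_cases hm : (v, !b) ∈ c
      · left; rw [Finset.card_erase_of_mem hm]; omega
      · right
        rw [Finset.erase_eq_of_notMem hm]
        refine ⟨h, ?_⟩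
        obtain ⟨w, hw, hwV⟩ := Finset.not_disjoint_iff.1 hnd
        refine Finset.not_disjoint_iff.2 ⟨w, hw, Finset.mem_erase.2 ⟨?_, hwV⟩⟩
        rintro rfl
        obtain ⟨⟨w', b'⟩, hl, rfl⟩ := Finset.mem_image.1 hw
        cases b <;> cases b' <;> simp_all

open scoped Pointwise in
theorem isPWO_hitSet {k : ℕ} (h0 : (hitSet k 0).IsPWO) (s : ℕ) : (hitSet k s).IsPWO := by
  induction s with
  | zero => exact h0
  | succ s ih =>
    have hsum : ((fun y : ℝ => y / 2) '' (hitSet k s + hitSet k s)).IsPWO :=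
      (ih.add ih).image_of_monotone (fun a b hab => by linarith)
    refine (hsum.union h0).mono ?_
    rintro y ⟨φ, ⟨hval, V, hcard, hV⟩, rfl⟩
    rcases V.eq_empty_or_nonempty with rfl | ⟨v, hvV⟩
    · exact Or.inr ⟨φ, ⟨hval, ∅, by simp, hV⟩, rfl⟩
    · refine Or.inl ⟨-satProb (fixVar φ v false) + -satProb (fixVar φ v true),
        Set.add_mem_add ⟨_, hitCnf_fixVar false hval hvV hcard hV, rfl⟩
          ⟨_, hitCnf_fixVar true hval hvV hcard hV, rfl⟩, ?_⟩
      dsimp only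
      rw [satProb_fixVar φ v]
      ring

theorem hitCnf_zero {k : ℕ} {φ : PCnf} : HitCnf k 0 φ ↔ IsKCnf k φ := by
  constructor
  · rintro ⟨hval, V, hcard, hV⟩
    obtain rfl : V = ∅ := by simpa using hcard
    exact ⟨hval, fun c hc => by simpa using hV c hc⟩
  · rintro ⟨hval, h⟩
    exact ⟨hval, ∅, by simp, fun c hc => Or.inl (h c hc)⟩

/-- If the packing number of a `(k + 1)`CNF formula is large, its satisfaction probability is
small; otherwise few variables meet all its clauses of size `k + 1`. -/
theorem satProb_le_or_hitCnf {k : ℕ} {φ : PCnf} (hφ : IsKCnf (k + 1) φ) (h : ℕ) :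
    satProb φ ≤ (1 - (1 / 2) ^ (k + 1)) ^ h ∨ HitCnf k (h * (k + 1)) φ := by
  rcases packing_or_hit φ clauseVars (k + 1)
    (fun e he => (card_clauseVars_le e).trans (hφ.2 e he)) h with ⟨π, hπ, hc, hd⟩ | ⟨V, hV, hhit⟩
  · left
    rw [satProb_eq subset_rfl, ← hc]
    refine (prob_mono ?_).trans (prob_packing_le (fun e => e) π
      (fun e he => ⟨hφ.1 e (hπ he), hφ.2 e (hπ he), clauseVars_subset_cnfVars (hπ he)⟩) hd)
    exact fun S _ hS e he => hS e (hπ he)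
  · right
    refine ⟨hφ.1, V, hV, fun c hc => ?_⟩
    rcases hhit c hc with h | h
    · left
      rw [clauseVars, Finset.image_eq_empty] at h
      simp [h]
    · exact Or.inr ⟨hφ.2 c hc, h⟩

theorem isPWO_spectrum (k : ℕ) : (hitSet k 0).IsPWO := by
  induction k with
  | zero =>
    have hfin : ((fun φ => -satProb φ) '' {φ : PCnf | φ ⊆ {∅}}).Finite :=
      Set.Finite.image _ (Finset.finite_toSet (({∅} : PCnf).powerset) |>.subset
        (fun φ hφ => Finset.mem_coe.2 (Finset.mem_powerset.2 hφ)))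
    refine hfin.isPWO.mono ?_
    rintro y ⟨φ, hφ, rfl⟩
    refine ⟨φ, fun c hc => ?_, rfl⟩
    have := (hitCnf_zero.1 hφ).2 c hc
    simpa using this
  | succ k ih =>
    have hδ : ∀ δ > 0, (hitSet (k + 1) 0 ∩ Set.Iio (-δ)).IsPWO := by
      intro δ hδ
      obtain ⟨h, hh⟩ := exists_pow_lt_of_lt_one hδ (one_sub_half_pow_lt_one (k + 1))
      refine (isPWO_hitSet ih (h * (k + 1))).mono ?_
      rintro y ⟨⟨φ, hφ, rfl⟩, hy⟩
      rcases satProb_le_or_hitCnf (hitCnf_zero.1 hφ) h with h' | h'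
      · simp only [Set.mem_Iio] at hy; linarith
      · exact ⟨φ, h', rfl⟩
    rw [Set.isPWO_iff_isWF, Set.isWF_iff_no_descending_seq]
    intro f hf hmem
    have h1 : f 1 < 0 := by
      obtain ⟨φ, -, h⟩ := hmem 0
      have := satProb_nonneg φ
      have := hf (show 0 < 1 by norm_num)
      linarith
    have hwf := (hδ (-f 1) (by linarith)).isWF
    rw [Set.isWF_iff_no_descending_seq] at hwf
    refine hwf (fun n => f (n + 2)) (fun a b hab => hf (by omega)) (fun n => ⟨hmem _, ?_⟩)
    simpa using hf (show 1 < n + 2 by omega)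

theorem exists_gap (k : ℕ) (x : ℝ) :
    ∃ ε > 0, ∀ y ∈ kcnfSpectrum k, x - ε < y → x ≤ y := by
  have hwf : (hitSet k 0 ∩ Set.Ioi (-x)).IsWF := ((isPWO_spectrum k).mono Set.inter_subset_left).isWF
  have hmem : ∀ y ∈ kcnfSpectrum k, y < x → -y ∈ hitSet k 0 ∩ Set.Ioi (-x) := by
    rintro y ⟨φ, hφ, rfl⟩ hy
    exact ⟨⟨φ, hitCnf_zero.2 hφ, rfl⟩, by simpa using hy⟩
  by_cases hne : (hitSet k 0 ∩ Set.Ioi (-x)).Nonempty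
  · have hm := (hwf.min_mem hne).2
    simp only [Set.mem_Ioi] at hm
    refine ⟨hwf.min hne + x, by linarith, fun y hy hxy => ?_⟩
    by_contra hlt
    have := hwf.min_le hne (hmem y hy (not_le.1 hlt))
    linarith
  · refine ⟨1, one_pos, fun y hy _ => ?_⟩
    by_contra hlt
    exact hne ⟨_, hmem y hy (not_le.1 hlt)⟩

/-! ### Sunflowers -/

/-- The members of `π` contain `c` and their petals `e \ c` are pairwise variable-disjoint. -/
def PetalDisjoint (π : PCnf) (c : PClause) : Prop :=
  (∀ e ∈ π, c ⊆ e) ∧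
    ∀ e ∈ π, ∀ e' ∈ π, e ≠ e' → Disjoint (clauseVars (e \ c)) (clauseVars (e' \ c))

/-- Replacing the link of the core of a sunflower by the core itself. -/
theorem exists_shrink {k : ℕ} {φ π : PCnf} {c : PClause} (hφ : IsKCnf k φ) (hπ : π ⊆ φ)
    (h2 : 2 ≤ π.card) (hd : PetalDisjoint π c) :
    ∃ φ', IsKCnf k φ' ∧ φ'.card < φ.card ∧ satProb φ' ≤ satProb φ ∧
      satProb φ ≤ satProb φ' + (1 - (1 / 2) ^ k) ^ π.card := by
  obtain ⟨e₀, he₀⟩ : π.Nonempty := Finset.card_pos.1 (by omega)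
  have hce := hd.1 e₀ he₀
  have hcv : clauseVars c ⊆ cnfVars φ :=
    (clauseVars_mono hce).trans (clauseVars_subset_cnfVars (hπ he₀))
  have hvars : cnfVars (insert c (φ.filter fun e => ¬ c ⊆ e)) ⊆ cnfVars φ := by
    refine Finset.sup_le fun e he => ?_
    rcases Finset.mem_insert.1 he with rfl | he
    · exact hcv
    · exact clauseVars_subset_cnfVars (Finset.mem_filter.1 he).1
  refine ⟨insert c (φ.filter fun e => ¬ c ⊆ e), ⟨?_, ?_⟩, ?_, ?_, ?_⟩
  · intro e he
    rcases Finset.mem_insert.1 he with rfl | he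
    · exact clauseValid_mono hce (hφ.1 _ (hπ he₀))
    · exact hφ.1 e (Finset.mem_filter.1 he).1
  · intro e he
    rcases Finset.mem_insert.1 he with rfl | he
    · exact (Finset.card_le_card hce).trans (hφ.2 _ (hπ he₀))
    · exact hφ.2 e (Finset.mem_filter.1 he).1
  · have h1 := Finset.card_filter_add_card_filter_not (s := φ) (fun e => c ⊆ e)
    have h3 : π.card ≤ (φ.filter fun e => c ⊆ e).card :=
      Finset.card_le_card fun e he => Finset.mem_filter.2 ⟨hπ he, hd.1 e he⟩
    have h4 := Finset.card_insert_le c (φ.filter fun e => ¬ c ⊆ e)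
    omega
  · rw [satProb_eq hvars, satProb_eq (φ := φ) subset_rfl]
    refine prob_mono fun S _ hS e he => ?_
    by_cases hc : c ⊆ e
    · obtain ⟨l, hl, hsat⟩ := hS c (Finset.mem_insert_self _ _)
      exact ⟨l, hc hl, hsat⟩
    · exact hS e (Finset.mem_insert_of_mem (Finset.mem_filter.2 ⟨he, hc⟩))
  · rw [satProb_eq hvars, satProb_eq (φ := φ) subset_rfl]
    refine le_trans (prob_mono (q := fun S => cnfSat S (insert c (φ.filter fun e => ¬ c ⊆ e)) ∨
      ∀ e ∈ π, clauseSat S (e \ c)) ?_) ((prob_or_le _ _ _).trans (add_le_add le_rfl ?_))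
    · intro S _ hS
      by_cases hc : clauseSat S c
      · left
        intro e he
        rcases Finset.mem_insert.1 he with rfl | he
        · exact hc
        · exact hS e (Finset.mem_filter.1 he).1
      · right
        intro e he
        obtain ⟨l, hl, hsat⟩ := hS e (hπ he)
        exact ⟨l, Finset.mem_sdiff.2 ⟨hl, fun h => hc ⟨l, h, hsat⟩⟩, hsat⟩
    · refine prob_packing_le (fun e => e \ c) π (fun e he => ⟨?_, ?_, ?_⟩) hd.2
      · exact clauseValid_mono Finset.sdiff_subset (hφ.1 e (hπ he))
      · exact (Finset.card_le_card Finset.sdiff_subset).trans (hφ.2 e (hπ he))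
      · exact (clauseVars_mono Finset.sdiff_subset).trans (clauseVars_subset_cnfVars (hπ he))

/-- A bound for the number of clauses above a core `c` with `|c| + j = k` in a formula without
sunflowers of size `h`: besides `c` itself, each clause contains one of at most `2 * (h * k)`
further literals. -/
def linkBound (h k : ℕ) : ℕ → ℕ
  | 0 => 1
  | j + 1 => 1 + (h * k * 2) * linkBound h k j

theorem card_link_le {h k : ℕ} {φ : PCnf} (hφ : IsKCnf k φ)
    (hno : ∀ c, ∀ π ⊆ φ, π.card = h → ¬ PetalDisjoint π c) (j : ℕ) :
    ∀ c : PClause, k ≤ c.card + j → (link φ c).card ≤ linkBound h k j := by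
  induction j with
  | zero =>
    intro c hc
    have : link φ c ⊆ {c} := by
      intro e he
      obtain ⟨he, hce⟩ := Finset.mem_filter.1 he
      rw [Finset.mem_singleton]
      exact (Finset.eq_of_subset_of_card_le hce ((hφ.2 e he).trans hc)).symm
    simpa [linkBound] using Finset.card_le_card this
  | succ j ih =>
    intro c hc
    rcases packing_or_hit (link φ c) (fun e => clauseVars (e \ c)) k
      (fun e he => (card_clauseVars_le _).trans ((Finset.card_le_card Finset.sdiff_subset).trans
        (hφ.2 e (Finset.mem_filter.1 he).1))) h with ⟨π, hπ, hcard, hd⟩ | ⟨V, hV, hhit⟩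
    · exact absurd ⟨fun e he => (Finset.mem_filter.1 (hπ he)).2, hd⟩
        (hno c π (hπ.trans (Finset.filter_subset _ _)) hcard)
    · have hsub : link φ c ⊆ insert c (((V ×ˢ (Finset.univ : Finset Bool)).filter
          (fun l => l ∉ c)).biUnion fun l => link φ (insert l c)) := by
        intro e he
        have hce := (Finset.mem_filter.1 he).2
        have heφ := (Finset.mem_filter.1 he).1
        rcases hhit e he with h0 | h0
        · rw [clauseVars, Finset.image_eq_empty, Finset.sdiff_eq_empty_iff_subset] at h0
          exact Finset.mem_insert.2 (Or.inl (h0.antisymm hce))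
        · obtain ⟨v, hv, hvV⟩ := Finset.not_disjoint_iff.1 h0
          obtain ⟨l, hl, rfl⟩ := Finset.mem_image.1 hv
          rw [Finset.mem_sdiff] at hl
          refine Finset.mem_insert_of_mem (Finset.mem_biUnion.2 ⟨l, ?_, ?_⟩)
          · simp [hvV, hl.2]
          · exact Finset.mem_filter.2 ⟨heφ, Finset.insert_subset hl.1 hce⟩
      refine (Finset.card_le_card hsub).trans ((Finset.card_insert_le _ _).trans ?_)
      rw [linkBound, add_comm]
      refine Nat.add_le_add_left ((Finset.card_biUnion_le_card_mul _ _ (linkBound h k j) ?_).trans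
        (Nat.mul_le_mul_right _ ?_)) 1
      · intro l hl
        refine ih _ ?_
        rw [Finset.card_insert_of_notMem (Finset.mem_filter.1 hl).2]
        omega
      · refine (Finset.card_filter_le _ _).trans ?_
        rw [Finset.card_product]
        simpa using hV

/-! ### Closedness -/

/-- Formulas with a bounded number of clauses have few variables, so their satisfaction
probabilities are dyadic rationals with bounded denominator. -/
theorem finite_satProb (k M : ℕ) :
    {y | ∃ φ, IsKCnf k φ ∧ φ.card ≤ M ∧ satProb φ = y}.Finite := by
  have hfin : ((fun q : ℕ × ℕ => (q.1 : ℝ) / 2 ^ q.2) ''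
      (((Finset.range (2 ^ (M * k) + 1)) ×ˢ (Finset.range (M * k + 1)) : Finset (ℕ × ℕ)) :
        Set (ℕ × ℕ))).Finite := (Finset.finite_toSet _).image _
  refine hfin.subset ?_
  rintro y ⟨φ, hφ, hM, rfl⟩
  have hv : (cnfVars φ).card ≤ M * k := by
    rw [cnfVars, Finset.sup_eq_biUnion]
    exact (Finset.card_biUnion_le_card_mul _ _ k
      (fun c hc => (card_clauseVars_le c).trans (hφ.2 c hc))).trans (Nat.mul_le_mul_right _ hM)
  refine ⟨(_, _), ?_, rfl⟩
  have h1 : ((cnfVars φ).powerset.filter (fun S => cnfSat S φ)).card ≤ 2 ^ (M * k) :=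
    (Finset.card_filter_le _ _).trans (by
      rw [Finset.card_powerset]; exact Nat.pow_le_pow_right (by norm_num) hv)
  rw [Finset.mem_coe, Finset.mem_product, Finset.mem_range, Finset.mem_range]
  exact ⟨Nat.lt_succ_of_le h1, Nat.lt_succ_of_le hv⟩

/-- For every `k`, the `k`CNF spectrum is a topologically closed subset of `ℝ`. -/
theorem kcnfSpectrum_isClosed (k : ℕ) : IsClosed (kcnfSpectrum k) := by
  refine isClosed_of_closure_subset fun x hx => ?_
  obtain ⟨ε, hε, hgap⟩ := exists_gap k x
  obtain ⟨h', hh'⟩ := exists_pow_lt_of_lt_one hε (one_sub_half_pow_lt_one k)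
  -- sunflowers of size at least two are needed for shrinking to reduce the number of clauses
  set h := h' + 2 with hh
  have hhε : (1 - (1 / 2) ^ k : ℝ) ^ h < ε :=
    (pow_le_pow_of_le_one (one_sub_half_pow_nonneg k) (one_sub_half_pow_lt_one k).le
      (by omega)).trans_lt hh'
  have hFin := finite_satProb k (linkBound h k k)
  suffices hcl : x ∈ closure {y | ∃ φ, IsKCnf k φ ∧ φ.card ≤ linkBound h k k ∧ satProb φ = y} by
    rw [hFin.isClosed.closure_eq] at hcl
    obtain ⟨φ, hφ, -, rfl⟩ := hcl
    exact ⟨φ, hφ, rfl⟩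
  rw [Metric.mem_closure_iff] at hx ⊢
  intro δ hδ
  -- a spectrum point in `[x, x + δ)`, realised with the fewest clauses
  have hex : ∃ n, ∃ φ, IsKCnf k φ ∧ φ.card = n ∧ x ≤ satProb φ ∧ satProb φ < x + δ := by
    obtain ⟨y, ⟨φ, hφ, rfl⟩, hy⟩ := hx (min δ ε) (lt_min hδ hε)
    rw [Real.dist_eq, abs_lt] at hy
    have := min_le_left δ ε
    have := min_le_right δ ε
    exact ⟨_, φ, hφ, rfl, hgap _ ⟨φ, hφ, rfl⟩ (by linarith), by linarith⟩
  obtain ⟨φ, hφ, hcard, hx1, hx2⟩ := Nat.find_spec hex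
  have hno : ∀ c, ∀ π ⊆ φ, π.card = h → ¬ PetalDisjoint π c := by
    intro c π hπ hπh hd
    obtain ⟨φ', hφ', hlt, hle, hge⟩ := exists_shrink hφ hπ (by omega) hd
    rw [hπh] at hge
    exact Nat.find_min hex (hcard ▸ hlt)
      ⟨φ', hφ', rfl, hgap _ ⟨φ', hφ', rfl⟩ (by linarith), by linarith⟩
  refine ⟨_, ⟨φ, hφ, ?_, rfl⟩, ?_⟩
  · have := card_link_le hφ hno k ∅ (by simp)
    simpa [link] using this
  · rw [Real.dist_eq, abs_lt]
    constructor <;> linarith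
end

section
/- Signed Sunflower Lemma: every kCNF formula φ with more than (2h)^k · k! clauses contains a sunflower ψ ⊆ φ of size |ψ| ≥ h + 1. -/
/-!
The proof follows the argument of Erdős and Rado, by induction on `k`. Take a packing `π ⊆ φ` of
maximum size. It is a sunflower with empty core, so one may assume `|π| ≤ h`. By maximality every
nonempty clause of `φ` shares a variable with some clause of `π`, hence contains one of the
`2 * |vars π| ≤ 2 * h * k` literals over the variables of `π` (`exists_hitting_vars`). For each
such literal `l`, deleting `l` from the clauses that contain it gives clauses with at most `k - 1`
literals, and a sunflower among these becomes a sunflower of `φ` when `l` is put back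
(`IsSunflower.image_insert`); so by induction at most `(2 * h) ^ (k - 1) * (k - 1)!` clauses
contain `l`.

Clauses may have fewer than `k` literals, so the empty clause needs care: it contains no literal
at all. If it lies in `φ`, it also lies in the maximum packing and contributes no variable there,
and the resulting saving of `2 * k` literals pays for it.
-/

open Finset

open scoped Classical

theorem clauseVars_insert (l : PLit) (c : PClause) :
    clauseVars (insert l c) = insert l.1 (clauseVars c) := by
  simp [clauseVars]

/-- A packing is a sunflower with empty core. -/
theorem IsPacking.isSunflower {π : PCnf} (hπ : IsPacking π) : IsSunflower π ∅ := by
  refine ⟨fun e _ => empty_subset e, fun e he e' he' hne => ?_⟩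
  simpa [clauseVars] using disjoint_iff_inter_eq_empty.mp (hπ e he e' he' hne)

theorem IsSunflower.image_insert {ψ : PCnf} {c : PClause} (hψ : IsSunflower ψ c) (l : PLit) :
    IsSunflower (ψ.image (insert l)) (insert l c) := by
  constructor
  · intro e he
    obtain ⟨a, ha, rfl⟩ := mem_image.mp he
    exact insert_subset_insert l (hψ.1 a ha)
  · intro e he e' he' hne
    obtain ⟨a, ha, rfl⟩ := mem_image.mp he
    obtain ⟨b, hb, rfl⟩ := mem_image.mp he'
    have hab : a ≠ b := fun hab => hne (by rw [hab])
    rw [clauseVars_insert, clauseVars_insert, clauseVars_insert, ← insert_inter_distrib,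
      hψ.2 a ha b hb hab]

/-- A maximum packing `π`, with the set `V` of its variables. The variable count involves
`π.erase ∅`, as the empty clause contributes no variables. -/
theorem exists_hitting_vars (k : ℕ) (φ : PCnf) (hk : ∀ c ∈ φ, c.card ≤ k) :
    ∃ π ⊆ φ, IsPacking π ∧ (∅ ∈ φ → ∅ ∈ π) ∧ ∃ V : Finset ℕ,
      V.card ≤ (π.erase ∅).card * k ∧ ∀ c ∈ φ, c ≠ ∅ → ∃ l ∈ c, l.1 ∈ V := by
  obtain ⟨π, hπ, hmax⟩ := (φ.powerset.filter IsPacking).exists_max_image card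
    ⟨∅, by simp [IsPacking]⟩
  simp only [mem_filter, mem_powerset] at hπ hmax
  obtain ⟨hsub, hpack⟩ := hπ
  -- A clause of `φ` that is variable-disjoint from all of `π` could be added to `π`.
  have key : ∀ c ∈ φ, (∀ e ∈ π, Disjoint (clauseVars c) (clauseVars e)) → c ∈ π := by
    intro c hc hd
    by_contra hcπ
    have := hmax (insert c π) ⟨insert_subset hc hsub, by
      intro a ha b hb hab
      rw [mem_insert] at ha hb
      rcases ha with rfl | ha <;> rcases hb with rfl | hb
      · exact absurd rfl hab
      · exact hd b hb
      · exact (hd a ha).symm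
      · exact hpack a ha b hb hab⟩
    rw [card_insert_of_notMem hcπ] at this
    omega
  refine ⟨π, hsub, hpack, fun h0 => key ∅ h0 (by simp [clauseVars]),
    (π.erase ∅).biUnion clauseVars, ?_, ?_⟩
  · refine card_biUnion_le_card_mul _ _ _ fun c hc => ?_
    exact card_image_le.trans (hk c (hsub (mem_of_mem_erase hc)))
  · intro c hc hne
    by_contra! hno
    have hd : ∀ e ∈ π, Disjoint (clauseVars c) (clauseVars e) := by
      intro e he
      rw [disjoint_left]
      intro v hv hv'
      obtain ⟨l, hl, rfl⟩ := mem_image.mp hv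
      refine hno l hl (mem_biUnion.mpr ⟨e, mem_erase.mpr ⟨?_, he⟩, hv'⟩)
      rintro rfl
      simp [clauseVars] at hv'
    obtain ⟨l, hl⟩ := nonempty_iff_ne_empty.mpr hne
    exact hno l hl (mem_biUnion.mpr
      ⟨c, mem_erase.mpr ⟨hne, key c hc hd⟩, mem_image_of_mem _ hl⟩)

/-- The contrapositive of the sunflower lemma. It holds even for clauses containing a variable
together with its negation. -/
theorem card_le_of_sunflower_free (h : ℕ) (k : ℕ) : ∀ φ : PCnf, (∀ c ∈ φ, c.card ≤ k) →
    (∀ ψ ⊆ φ, ∀ c : PClause, IsSunflower ψ c → ψ.card ≤ h) →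
    φ.card ≤ (2 * h) ^ k * Nat.factorial k := by
  induction k with
  | zero =>
    intro φ hk _
    have hsub : φ ⊆ {∅} := fun c hc => by simpa using hk c hc
    simpa using card_le_card hsub
  | succ k ih =>
    intro φ hk hfree
    obtain ⟨π, hsub, hpack, hemp, V, hV, hhit⟩ := exists_hitting_vars (k + 1) φ hk
    have hπ : π.card ≤ h := hfree π hsub ∅ hpack.isSunflower
    set M := (2 * h) ^ k * Nat.factorial k with hM
    have hlit : ∀ l ∈ V ×ˢ (univ : Finset Bool), (φ.filter (l ∈ ·)).card ≤ M := by
      intro l _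
      have hinj : Set.InjOn (fun c : PClause => c.erase l) (φ.filter (l ∈ ·)) := by
        intro a ha b hb hab
        simp only [coe_filter, Set.mem_ofPred_eq] at ha hb
        rw [← insert_erase ha.2, ← insert_erase hb.2]
        exact congrArg (insert l) hab
      rw [← card_image_of_injOn hinj]
      apply ih
      · intro c hc
        obtain ⟨a, ha, rfl⟩ := mem_image.mp hc
        rw [mem_filter] at ha
        have := hk a ha.1
        rw [card_erase_of_mem ha.2]
        omega
      · intro ψ hψ c hc
        have hmem : ∀ e ∈ ψ, l ∉ e ∧ insert l e ∈ φ := by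
          intro e he
          obtain ⟨a, ha, rfl⟩ := mem_image.mp (hψ he)
          rw [mem_filter] at ha
          exact ⟨notMem_erase l a, by rw [insert_erase ha.2]; exact ha.1⟩
        have hinj' : Set.InjOn (insert l : PClause → PClause) ψ := by
          intro a ha b hb hab
          rw [← erase_insert (hmem a ha).1, ← erase_insert (hmem b hb).1, hab]
        rw [← card_image_of_injOn hinj']
        refine hfree _ ?_ _ (hc.image_insert l)
        intro e he
        obtain ⟨a, ha, rfl⟩ := mem_image.mp he
        exact (hmem a ha).2
    have hcover : φ.erase ∅ ⊆ (V ×ˢ (univ : Finset Bool)).biUnion fun l => φ.filter (l ∈ ·) := by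
      intro c hc
      rw [mem_erase] at hc
      obtain ⟨l, hl, hlV⟩ := hhit c hc.2 hc.1
      exact mem_biUnion.mpr ⟨l, by simp [hlV], mem_filter.mpr ⟨hc.2, hl⟩⟩
    have hcard : (φ.erase ∅).card ≤ V.card * 2 * M := by
      refine (card_le_card hcover).trans ((card_biUnion_le_card_mul _ _ _ hlit).trans ?_)
      simp
    have hgoal : (2 * h) ^ (k + 1) * Nat.factorial (k + 1) = h * (k + 1) * 2 * M := by
      rw [hM, Nat.factorial_succ]; ring
    rw [hgoal]
    have hbound : (φ.erase ∅).card ≤ (π.erase ∅).card * (k + 1) * 2 * M :=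
      hcard.trans (by gcongr)
    by_cases h0 : ∅ ∈ φ
    · have hφ := card_erase_add_one h0
      have hπ' := card_erase_add_one (hemp h0)
      have hpos : 0 < M := by
        have : 0 < h := by omega
        positivity
      have hstep : ((π.erase ∅).card + 1) * (k + 1) * 2 * M ≤ h * (k + 1) * 2 * M := by
        gcongr
        omega
      nlinarith [Nat.zero_le (k * M)]
    · rw [erase_eq_of_notMem h0] at hbound
      refine hbound.trans ?_
      gcongr
      exact (card_le_card (erase_subset _ _)).trans hπ

/-- **Signed Sunflower Lemma.** Every `k`CNF formula with more than `(2h)^k · k!`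
clauses contains a sunflower of size at least `h + 1`. -/
theorem signed_sunflower_lemma (k h : ℕ) (φ : PCnf) (hφ : IsKCnf k φ)
    (hcard : (2 * h) ^ k * Nat.factorial k < φ.card) :
    ∃ ψ ⊆ φ, ∃ c : PClause, IsSunflower ψ c ∧ h + 1 ≤ ψ.card := by
  by_contra! hno
  exact hcard.not_ge (card_le_of_sunflower_free h k φ hφ.2 fun ψ hψ c hc =>
    Nat.lt_succ_iff.mp (hno ψ hψ c hc))
end

section
/- The part of the 2CNF spectrum above one half is exactly the set of numbers 1/2 + 2^{−e}: 2cnfs-σ-spectrum ∩ (1/2, 1] = {1/2 + 2^{−e} : e ∈ ℕ, e ≥ 1}. -/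
/-!
Let `φ` be a 2CNF formula with `σ(φ) > 1/2`.  An empty clause or a unit clause already forces
`σ(φ) ≤ 1/2`, so every clause has exactly two literals.  If some variable `x` occurs with both
signs, in clauses `{x, a}` and `{¬x, b}`, conditioning on `x` leaves `b` or `a` to be satisfied, so
`σ(φ) ≤ 1/2` (`pr_conflict`).  Hence every variable occurs with one sign only.

If two distinct clauses `{a, b}`, `{a, e}` share the literal `a` and a third clause `{c, d}` misses
it, then conditioning on `a` gives `σ(φ) ≤ (3/4 + 1/4) / 2 = 1/2` (`pr_cherry`).  So either all
clauses share one literal `a`, and `φ` is a sunflower whose probability is `1/2 + 2^{-(n+1)}` with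
`n` the number of clauses (`satProb_sunflower`), or the clauses are pairwise variable-disjoint.
In the latter case `n` clauses give `(3/4)^n`, and since `27/64 < 1/2` there are at most two of them;
two give `9/16 = 1/2 + 2^{-4}`.  Conversely, the sunflowers realise all values `1/2 + 2^{-e}`.

All probabilities are computed by conditioning on one variable at a time without changing the
set of variables (`pr_cond`).
-/

open Finset

open scoped Classical

/-! ### Probabilities and conditioning -/

/-- The probability of the event `P` for a uniformly random assignment `V → {0,1}`, encoded as a
subset of `V`. -/
noncomputable def pr (V : Finset ℕ) (P : Finset ℕ → Prop) : ℝ :=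
  (V.powerset.filter P).card / 2 ^ V.card

/-- The assignment `S` with the value of the variable `v` overwritten by `b`. -/
def setVar (S : Finset ℕ) (v : ℕ) (b : Bool) : Finset ℕ :=
  if b then insert v S else S.erase v

/-- The event `P` does not depend on the value of the variable `v`. -/
def Ignores (P : Finset ℕ → Prop) (v : ℕ) : Prop := ∀ S b, P (setVar S v b) ↔ P S

lemma litSat_setVar (S : Finset ℕ) (v : ℕ) (b : Bool) (l : PLit) :
    litSat (setVar S v b) l ↔ if l.1 = v then l.2 = b else litSat S l := by
  obtain ⟨x, s⟩ := l
  by_cases h : x = v <;> cases b <;> cases s <;> simp [litSat, setVar, h]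

lemma pr_split {V : Finset ℕ} {v : ℕ} (hv : v ∈ V) (P : Finset ℕ → Prop) (b : Bool) :
    pr V P = (pr V (fun S => P (setVar S v b)) + pr V (fun S => P (setVar S v !b))) / 2 := by
  have key : ∀ b, 2 * (V.powerset.filter P).card =
      (V.powerset.filter (fun S => P (setVar S v b))).card +
      (V.powerset.filter (fun S => P (setVar S v !b))).card := by
    obtain ⟨W, hW, rfl⟩ : ∃ W, v ∉ W ∧ insert v W = V :=
      ⟨V.erase v, by simp, Finset.insert_erase hv⟩
    have he : ∀ t ∈ W.powerset, t.erase v = t := fun t ht =>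
      Finset.erase_eq_of_notMem fun h => hW (Finset.mem_powerset.1 ht h)
    have h1 : (∑ t ∈ W.powerset, if P (t.erase v) then 1 else 0) =
        ∑ t ∈ W.powerset, if P t then 1 else 0 :=
      Finset.sum_congr rfl fun t ht => by rw [he t ht]
    have h2 : (∑ t ∈ W.powerset, if P ((insert v t).erase v) then 1 else 0) =
        ∑ t ∈ W.powerset, if P t then 1 else 0 :=
      Finset.sum_congr rfl fun t ht => by rw [Finset.erase_insert_eq_erase, he t ht]
    intro b
    simp only [Finset.card_filter, Finset.sum_powerset_insert hW]
    cases b <;> simp only [setVar, Bool.not_true, Bool.not_false, Bool.false_eq_true,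
      if_true, if_false, Finset.insert_idem, h1, h2] <;> ring
  have k : (2 : ℝ) * (V.powerset.filter P).card =
      (V.powerset.filter (fun S => P (setVar S v b))).card +
      (V.powerset.filter (fun S => P (setVar S v !b))).card := by exact_mod_cast key b
  unfold pr
  rw [← add_div, ← k]
  ring

lemma pr_mono {V : Finset ℕ} {P Q : Finset ℕ → Prop} (h : ∀ S, P S → Q S) :
    pr V P ≤ pr V Q := by
  unfold pr
  have := Finset.card_le_card (Finset.monotone_filter_right V.powerset fun S _ => h S)
  gcongr

lemma pr_congr {V : Finset ℕ} {P Q : Finset ℕ → Prop} (h : ∀ S, P S ↔ Q S) :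
    pr V P = pr V Q := by
  rw [funext fun S => propext (h S)]

/-- Conditioning on the literal `l`: the event `P` becomes `Q` when `l` is true, and `R` when `l` is
false. -/
lemma pr_cond {V : Finset ℕ} {l : PLit} (hl : l.1 ∈ V) {P : Finset ℕ → Prop}
    (Q R : Finset ℕ → Prop) (hQ : ∀ S, P (setVar S l.1 l.2) ↔ Q S)
    (hR : ∀ S, P (setVar S l.1 !l.2) ↔ R S) : pr V P = (pr V Q + pr V R) / 2 := by
  rw [pr_split hl P l.2, pr_congr hQ, pr_congr hR]

lemma pr_true (V : Finset ℕ) : pr V (fun _ => True) = 1 := by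
  simp [pr]

lemma pr_false (V : Finset ℕ) : pr V (fun _ => False) = 0 := by
  simp [pr]

lemma ignores_true (v : ℕ) : Ignores (fun _ => True) v := fun _ _ => Iff.rfl

lemma ignores_lit {l : PLit} {v : ℕ} (h : l.1 ≠ v) : Ignores (fun S => litSat S l) v :=
  fun S b => by simp [litSat_setVar, h]

lemma Ignores.or {P Q : Finset ℕ → Prop} {v : ℕ} (hP : Ignores P v) (hQ : Ignores Q v) :
    Ignores (fun S => P S ∨ Q S) v := fun S b => or_congr (hP S b) (hQ S b)

lemma Ignores.and {P Q : Finset ℕ → Prop} {v : ℕ} (hP : Ignores P v) (hQ : Ignores Q v) :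
    Ignores (fun S => P S ∧ Q S) v := fun S b => and_congr (hP S b) (hQ S b)

/-! ### Probabilities of small events -/

lemma pr_lit_and {V : Finset ℕ} {l : PLit} (hl : l.1 ∈ V) {P : Finset ℕ → Prop}
    (hP : Ignores P l.1) : pr V (fun S => litSat S l ∧ P S) = pr V P / 2 := by
  rw [pr_cond hl P (fun _ => False), pr_false, add_zero]
  · intro S; simp [litSat_setVar, hP S _]
  · intro S; simp [litSat_setVar]

lemma pr_lit {V : Finset ℕ} {l : PLit} (hl : l.1 ∈ V) : pr V (fun S => litSat S l) = 1 / 2 := by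
  rw [← pr_true V, ← pr_lit_and hl (ignores_true _)]
  exact pr_congr fun S => by simp

lemma pr_or_and {V : Finset ℕ} {a b : PLit} (ha : a.1 ∈ V) (hb : b.1 ∈ V) (hab : a.1 ≠ b.1)
    {P : Finset ℕ → Prop} (hPa : Ignores P a.1) (hPb : Ignores P b.1) :
    pr V (fun S => (litSat S a ∨ litSat S b) ∧ P S) = 3 / 4 * pr V P := by
  rw [pr_cond ha P (fun S => litSat S b ∧ P S), pr_lit_and hb hPb]
  · ring
  · intro S; simp [litSat_setVar, hPa S _]
  · intro S; simp [litSat_setVar, hPa S _, hab.symm]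

lemma pr_or {V : Finset ℕ} {a b : PLit} (ha : a.1 ∈ V) (hb : b.1 ∈ V) (hab : a.1 ≠ b.1) :
    pr V (fun S => litSat S a ∨ litSat S b) = 3 / 4 := by
  have := pr_or_and ha hb hab (ignores_true _) (ignores_true _)
  rw [pr_true, mul_one] at this
  rw [← this]
  exact pr_congr fun S => by simp

/-- Two clauses `{x, a}` and `{x', b}` in which `x` and `x'` are complementary have joint
probability `1/2`; the variables of `a` and `b` may coincide. -/
lemma pr_conflict {V : Finset ℕ} {x x' a b : PLit} (hx : x.1 ∈ V) (ha : a.1 ∈ V) (hb : b.1 ∈ V)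
    (hxx : x'.1 = x.1) (hne : x'.2 = !x.2) (hax : a.1 ≠ x.1) (hbx : b.1 ≠ x.1) :
    pr V (fun S => (litSat S x ∨ litSat S a) ∧ (litSat S x' ∨ litSat S b)) = 1 / 2 := by
  rw [pr_cond hx (fun S => litSat S b) (fun S => litSat S a), pr_lit ha, pr_lit hb]
  · norm_num
  · intro S; simp [litSat_setVar, hxx, hne, hbx]
  · intro S; simp [litSat_setVar, hxx, hne, hax]

/-- Two clauses `{a, b}`, `{a, e}` together with a clause `{c, d}` avoiding the variable of `a`.
Coincidences between `b, e` and `c, d` are allowed, which covers triangles, paths and the disjoint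
case at once: given `¬a`, the literals `b` and `e` are forced, and the third clause is dropped. -/
lemma pr_cherry {V : Finset ℕ} {a b e c d : PLit} (ha : a.1 ∈ V) (hb : b.1 ∈ V) (he : e.1 ∈ V)
    (hc : c.1 ∈ V) (hd : d.1 ∈ V) (hba : b.1 ≠ a.1) (hea : e.1 ≠ a.1) (hca : c.1 ≠ a.1)
    (hda : d.1 ≠ a.1) (hbe : b.1 ≠ e.1) (hcd : c.1 ≠ d.1) :
    pr V (fun S => (litSat S a ∨ litSat S b) ∧ (litSat S a ∨ litSat S e) ∧
      (litSat S c ∨ litSat S d)) ≤ 1 / 2 := by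
  rw [pr_cond ha (fun S => litSat S c ∨ litSat S d)
    (fun S => litSat S b ∧ litSat S e ∧ (litSat S c ∨ litSat S d)), pr_or hc hd hcd]
  · have h1 := pr_lit_and hb (ignores_lit hbe.symm)
    rw [pr_lit he] at h1
    have h2 : pr V (fun S => litSat S b ∧ litSat S e ∧ (litSat S c ∨ litSat S d)) ≤
        pr V (fun S => litSat S b ∧ litSat S e) := pr_mono fun S hS => ⟨hS.1, hS.2.1⟩
    linarith
  · intro S; simp [litSat_setVar, hca, hda]
  · intro S; simp [litSat_setVar, hba, hea, hca, hda]

lemma pr_forall {V : Finset ℕ} (L : Finset PLit) (hV : ∀ l ∈ L, l.1 ∈ V)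
    (hinj : ∀ l ∈ L, ∀ l' ∈ L, l.1 = l'.1 → l = l') :
    pr V (fun S => ∀ l ∈ L, litSat S l) = (1 / 2) ^ L.card := by
  induction L using Finset.induction_on with
  | empty => simpa using pr_true V
  | insert l L hl ih =>
    have hP : Ignores (fun S => ∀ l ∈ L, litSat S l) l.1 := fun S b =>
      forall₂_congr fun m hm => by
        refine ignores_lit (fun h => hl ?_) S b
        rw [← hinj m (by simp [hm]) l (by simp) h]
        exact hm
    rw [Finset.card_insert_of_notMem hl, pow_succ,
      ← ih (fun m hm => hV m (by simp [hm]))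
        (fun m hm m' hm' => hinj m (by simp [hm]) m' (by simp [hm'])),
      pr_congr (Q := fun S => litSat S l ∧ ∀ m ∈ L, litSat S m),
      pr_lit_and (hV l (by simp)) hP]
    · ring
    · intro S; simp

/-! ### Satisfaction probabilities of formulas -/

lemma mem_cnfVars_s19 {φ : PCnf} {c : PClause} {l : PLit} (hc : c ∈ φ) (hl : l ∈ c) :
    l.1 ∈ cnfVars φ :=
  Finset.le_sup (f := clauseVars) hc (Finset.mem_image_of_mem _ hl)

lemma clauseSat_pair (S : Finset ℕ) (a b : PLit) :
    clauseSat S {a, b} ↔ litSat S a ∨ litSat S b := by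
  simp [clauseSat]

lemma satProb_eq_pr (φ : PCnf) : satProb φ = pr (cnfVars φ) (fun S => cnfSat S φ) := rfl

lemma satProb_empty : satProb ∅ = 1 := by
  rw [satProb_eq_pr, ← pr_true (cnfVars ∅)]
  exact pr_congr fun S => by simp [cnfSat]

/-- The formula with clauses `{a, b}`, for `b` in a nonempty set `L` of literals over distinct
variables other than that of `a`. -/
lemma satProb_sunflower (a : PLit) (L : Finset PLit) (hL : L.Nonempty) (ha : ∀ l ∈ L, l.1 ≠ a.1)
    (hinj : ∀ l ∈ L, ∀ l' ∈ L, l.1 = l'.1 → l = l') :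
    satProb (L.image fun b => ({a, b} : PClause)) = 1 / 2 + (1 / 2) ^ (L.card + 1) := by
  obtain ⟨l₀, hl₀⟩ := hL
  have hmem : ∀ l ∈ L, ({a, l} : PClause) ∈ L.image fun b => ({a, b} : PClause) :=
    fun l hl => Finset.mem_image_of_mem _ hl
  have hsat : ∀ S, cnfSat S (L.image fun b => ({a, b} : PClause)) ↔
      ∀ l ∈ L, litSat S a ∨ litSat S l := fun S => by
    simp only [cnfSat, Finset.forall_mem_image, clauseSat_pair]
  rw [satProb_eq_pr, pr_congr hsat,
    pr_cond (mem_cnfVars_s19 (hmem l₀ hl₀) (by simp : a ∈ _)) (fun _ => True)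
      (fun S => ∀ l ∈ L, litSat S l), pr_true,
    pr_forall L (fun l hl => mem_cnfVars_s19 (hmem l hl) (by simp)) hinj]
  · ring
  · intro S; simp [litSat_setVar]
  · intro S
    refine forall₂_congr fun l hl => ?_
    simp [litSat_setVar, ha l hl]

/-! ### The structure of 2CNF formulas above one half -/

lemma exists_of_half_lt {φ : PCnf} (hφ : IsKCnf 2 φ) (h : 1 / 2 < satProb φ) :
    ∃ e : ℕ, 1 ≤ e ∧ satProb φ = 1 / 2 + (1 / 2) ^ e := by
  have bound : ∀ Q : Finset ℕ → Prop, (∀ S, cnfSat S φ → Q S) → pr (cnfVars φ) Q ≤ 1 / 2 →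
      False := fun Q hQ hle => absurd (h.trans_le (pr_mono hQ)) (not_lt.2 hle)
  have hpair : ∀ c ∈ φ, ∀ a ∈ c, ∃ b, b.1 ≠ a.1 ∧ c = {a, b} := by
    intro c hc a ha
    by_cases hu : ∃ b ∈ c, b ≠ a
    · obtain ⟨b, hb, hba⟩ := hu
      refine ⟨b, fun hv => ?_, ?_⟩
      · obtain ⟨x, s⟩ := a
        obtain ⟨y, t⟩ := b
        obtain rfl : y = x := hv
        have := hφ.1 c hc y
        cases s <;> cases t <;> simp_all
      · refine (Finset.eq_of_subset_of_card_le (fun l hl => ?_) ?_).symm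
        · rcases Finset.mem_insert.1 hl with rfl | hl
          · exact ha
          · rwa [Finset.mem_singleton.1 hl]
        · rw [Finset.card_pair hba.symm]
          exact hφ.2 c hc
    · push Not at hu
      refine (bound (fun S => litSat S a) (fun S hS => ?_)
        (pr_lit (mem_cnfVars_s19 hc ha)).le).elim
      obtain ⟨l, hl, hs⟩ := hS c hc
      rwa [← hu l hl]
  have hne : ∀ c ∈ φ, ∃ a, a ∈ c := by
    intro c hc
    by_contra hcon
    push Not at hcon
    refine bound (fun _ => False) (fun S hS => ?_) (by rw [pr_false]; norm_num)
    obtain ⟨l, hl, -⟩ := hS c hc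
    exact hcon l hl
  -- No variable occurs with both signs, so variables and literals of `φ` correspond.
  have hcons : ∀ c ∈ φ, ∀ c' ∈ φ, ∀ a ∈ c, ∀ a' ∈ c', a.1 = a'.1 → a = a' := by
    intro c hc c' hc' a ha a' ha' hv
    by_contra hne
    obtain ⟨b, hb, rfl⟩ := hpair c hc a ha
    obtain ⟨b', hb', rfl⟩ := hpair c' hc' a' ha'
    have hs : a'.2 = !a.2 := by
      rw [Bool.eq_not]
      exact fun hs => hne (Prod.ext hv hs.symm)
    refine bound _ (fun S hS => ⟨(clauseSat_pair S a b).1 (hS _ hc),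
      (clauseSat_pair S a' b').1 (hS _ hc')⟩) (pr_conflict (mem_cnfVars_s19 hc ha)
        (mem_cnfVars_s19 hc (by simp)) (mem_cnfVars_s19 hc' (by simp)) hv.symm hs hb (hv ▸ hb')).le
  -- A literal shared by two clauses is the core of a sunflower.
  have hshare : ∀ c ∈ φ, ∀ c' ∈ φ, c ≠ c' → ∀ a ∈ c, a ∈ c' → ∀ d ∈ φ, a ∈ d := by
    intro c hc c' hc' hcc a ha ha' d hd
    by_contra had
    obtain ⟨x, hx⟩ := hne d hd
    obtain ⟨b, hb, rfl⟩ := hpair c hc a ha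
    obtain ⟨e, he, rfl⟩ := hpair c' hc' a ha'
    obtain ⟨y, hy, rfl⟩ := hpair d hd x hx
    have hxa : x.1 ≠ a.1 := fun hv => had (by simp [hcons _ hd _ hc x hx a ha hv])
    have hya : y.1 ≠ a.1 := fun hv => had (by simp [hcons _ hd _ hc y (by simp) a ha hv])
    have hbe : b.1 ≠ e.1 := fun hv =>
      hcc (by rw [hcons _ hc _ hc' b (by simp) e (by simp) hv])
    exact bound _ (fun S hS => ⟨(clauseSat_pair S a b).1 (hS _ hc),
      (clauseSat_pair S a e).1 (hS _ hc'), (clauseSat_pair S x y).1 (hS _ hd)⟩)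
      (pr_cherry (mem_cnfVars_s19 hc ha) (mem_cnfVars_s19 hc (by simp)) (mem_cnfVars_s19 hc' (by simp))
        (mem_cnfVars_s19 hd hx) (mem_cnfVars_s19 hd (by simp)) hb he hxa hya hbe hy.symm)
  rcases φ.eq_empty_or_nonempty with rfl | ⟨c, hc⟩
  · exact ⟨1, le_rfl, by rw [satProb_empty]; norm_num⟩
  by_cases hcore : ∃ a, ∀ c ∈ φ, a ∈ c
  · obtain ⟨a, ha⟩ := hcore
    -- The petals: all literals of the formula other than the core `a`.
    set L : Finset PLit := (φ.sup id).erase a with hLdef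
    have hL : ∀ l, l ∈ L ↔ l ≠ a ∧ ∃ c ∈ φ, l ∈ c := fun l => by
      simp [hLdef, Finset.mem_sup]
    have hφL : φ = L.image fun b => ({a, b} : PClause) := by
      ext d
      rw [Finset.mem_image]
      constructor
      · intro hd
        obtain ⟨b, hb, rfl⟩ := hpair d hd a (ha d hd)
        exact ⟨b, (hL b).2 ⟨fun hba => hb (by rw [hba]), _, hd, by simp⟩, rfl⟩
      · rintro ⟨b, hb, rfl⟩
        obtain ⟨hba, d, hd, hbd⟩ := (hL b).1 hb
        obtain ⟨b', hb', rfl⟩ := hpair d hd a (ha d hd)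
        obtain rfl : b = b' := by simpa [hba] using hbd
        exact hd
    refine ⟨L.card + 1, by omega, ?_⟩
    conv_lhs => rw [hφL]
    refine satProb_sunflower a L ?_ ?_ ?_
    · obtain ⟨b, hb, rfl⟩ := hpair c hc a (ha c hc)
      exact ⟨b, (hL b).2 ⟨fun hba => hb (by rw [hba]), _, hc, by simp⟩⟩
    · intro l hl hv
      obtain ⟨hla, d, hd, hld⟩ := (hL l).1 hl
      exact hla (hcons d hd d hd l hld a (ha d hd) hv)
    · intro l hl l' hl' hv
      obtain ⟨-, d, hd, hld⟩ := (hL l).1 hl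
      obtain ⟨-, d', hd', hld'⟩ := (hL l').1 hl'
      exact hcons d hd d' hd' l hld l' hld' hv
  · have hdisj : ∀ c ∈ φ, ∀ c' ∈ φ, c ≠ c' → ∀ a ∈ c, ∀ a' ∈ c', a.1 ≠ a'.1 := by
      intro c hc c' hc' hcc a ha a' ha' hv
      obtain rfl := hcons c hc c' hc' a ha a' ha' hv
      exact hcore ⟨a, hshare c hc c' hc' hcc a ha ha'⟩
    have hd : ∃ d ∈ φ, c ≠ d := by
      obtain ⟨a, ha⟩ := hne c hc
      by_contra hcon
      push Not at hcon
      exact hcore ⟨a, fun d hd => hcon d hd ▸ ha⟩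
    obtain ⟨d, hd, hcd⟩ := hd
    obtain ⟨a, ha⟩ := hne c hc
    obtain ⟨x, hx⟩ := hne d hd
    obtain ⟨b, hb, hcab⟩ := hpair c hc a ha
    obtain ⟨y, hy, hdxy⟩ := hpair d hd x hx
    have hbc : b ∈ c := by simp [hcab]
    have hyd : y ∈ d := by simp [hdxy]
    have two : pr (cnfVars φ) (fun S => (litSat S a ∨ litSat S b) ∧ (litSat S x ∨ litSat S y)) =
        9 / 16 := by
      have hcd' := hdisj d hd c hc hcd.symm
      rw [pr_or_and (mem_cnfVars_s19 hc ha) (mem_cnfVars_s19 hc hbc) hb.symm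
        ((ignores_lit (hcd' x hx a ha)).or (ignores_lit (hcd' y hyd a ha)))
        ((ignores_lit (hcd' x hx b hbc)).or (ignores_lit (hcd' y hyd b hbc))),
        pr_or (mem_cnfVars_s19 hd hx) (mem_cnfVars_s19 hd hyd) hy.symm]
      norm_num
    have hall : ∀ e ∈ φ, e = c ∨ e = d := by
      intro e he
      by_contra hcon
      push Not at hcon
      obtain ⟨u, hu⟩ := hne e he
      obtain ⟨w, hw, heuw⟩ := hpair e he u hu
      have hwe : w ∈ e := by simp [heuw]
      have ign : ∀ v ∈ e, Ignores (fun S => (litSat S a ∨ litSat S b) ∧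
          (litSat S x ∨ litSat S y)) v.1 := fun v hv => by
        have h1 := hdisj c hc e he hcon.1.symm
        have h2 := hdisj d hd e he hcon.2.symm
        exact ((ignores_lit (h1 a ha v hv)).or (ignores_lit (h1 b hbc v hv))).and
          ((ignores_lit (h2 x hx v hv)).or (ignores_lit (h2 y hyd v hv)))
      refine bound (fun S => (litSat S u ∨ litSat S w) ∧ (litSat S a ∨ litSat S b) ∧
        (litSat S x ∨ litSat S y)) (fun S hS => ?_) ?_
      · rw [← clauseSat_pair, ← clauseSat_pair, ← clauseSat_pair, ← hcab, ← hdxy, ← heuw]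
        exact ⟨hS e he, hS c hc, hS d hd⟩
      · rw [pr_or_and (mem_cnfVars_s19 he hu) (mem_cnfVars_s19 he hwe) hw.symm (ign u hu) (ign w hwe), two]
        norm_num
    refine ⟨4, by norm_num, ?_⟩
    rw [satProb_eq_pr, pr_congr (Q := fun S => (litSat S a ∨ litSat S b) ∧
      (litSat S x ∨ litSat S y)), two]
    · norm_num
    · intro S
      rw [← clauseSat_pair, ← clauseSat_pair, ← hcab, ← hdxy]
      refine ⟨fun hS => ⟨hS c hc, hS d hd⟩, fun hS e he => ?_⟩
      rcases hall e he with rfl | rfl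
      exacts [hS.1, hS.2]

/-! ### Realising the values -/

lemma exists_sunflower (n : ℕ) :
    ∃ φ : PCnf, IsKCnf 2 φ ∧ satProb φ = 1 / 2 + (1 / 2) ^ (n + 1) := by
  rcases Nat.eq_zero_or_pos n with rfl | hn
  · exact ⟨∅, ⟨by simp [cnfValid], by simp⟩, by rw [satProb_empty]; norm_num⟩
  · let L : Finset PLit := (Finset.range n).image fun i => (i + 1, true)
    have hcard : L.card = n := by
      rw [Finset.card_image_of_injective _ (fun i j h => by simpa using h), Finset.card_range]
    have hmem : ∀ l ∈ L, l.1 ≠ 0 ∧ l.2 = true := by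
      intro l hl
      obtain ⟨i, -, rfl⟩ := Finset.mem_image.1 hl
      simp
    refine ⟨L.image fun b => {(0, true), b}, ⟨?_, ?_⟩, ?_⟩
    · intro c hc v hv
      obtain ⟨b, hb, rfl⟩ := Finset.mem_image.1 hc
      -- All literals are positive.
      have h2 := (hmem b hb).2
      rcases Finset.mem_insert.1 hv.2 with h | h
      · simp at h
      · rw [← Finset.mem_singleton.1 h] at h2
        simp at h2
    · intro c hc
      obtain ⟨b, hb, rfl⟩ := Finset.mem_image.1 hc
      exact Finset.card_le_two
    · rw [satProb_sunflower (0, true) L (Finset.card_pos.1 (hcard ▸ hn))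
        (fun l hl => (hmem l hl).1), hcard]
      intro l hl l' hl' hv
      exact Prod.ext hv ((hmem l hl).2.trans (hmem l' hl').2.symm)

/-- The part of the `2`CNF spectrum above one half is exactly
`{1/2 + 2^{-e} : e ≥ 1}`. -/
theorem spectrum2_above_half :
    kcnfSpectrum 2 ∩ Set.Ioc (1 / 2 : ℝ) 1 =
      {x : ℝ | ∃ e : ℕ, 1 ≤ e ∧ x = 1 / 2 + (1 / 2) ^ e} := by
  ext x
  constructor
  · rintro ⟨⟨φ, hφ, rfl⟩, hlt, -⟩
    exact exists_of_half_lt hφ hlt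
  · rintro ⟨e, he, rfl⟩
    obtain ⟨n, rfl⟩ : ∃ n, e = n + 1 := ⟨e - 1, by omega⟩
    refine ⟨exists_sunflower n, lt_add_of_pos_right _ (by positivity), ?_⟩
    have h1 : (1 / 2 : ℝ) ^ n ≤ 1 := pow_le_one₀ (by norm_num) (by norm_num)
    rw [pow_succ]
    linarith
end
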